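/- In A(1), the augmentation ideal I, i.e., the two-sided ideal generated by Sq1 and Sq2, satisfies I⁸ = 0. -/

import Mathlib

/-- The relations defining `A(1)`: `Sq¹·Sq¹ = 0` and `Sq²·Sq² + Sq¹·Sq²·Sq¹ = 0`. -/
inductive A1Rel : FreeAlgebra (ZMod 2) (Fin 2) → FreeAlgebra (ZMod 2) (Fin 2) → Prop
  | sq1 : A1Rel (FreeAlgebra.ι (ZMod 2) 0 * FreeAlgebra.ι (ZMod 2) 0) 0
  | sq2 : A1Rel (FreeAlgebra.ι (ZMod 2) 1 * FreeAlgebra.ι (ZMod 2) 1 +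
      FreeAlgebra.ι (ZMod 2) 0 * FreeAlgebra.ι (ZMod 2) 1 * FreeAlgebra.ι (ZMod 2) 0) 0

/-- `A(1)`, the subalgebra of the mod 2 Steenrod algebra generated by `Sq¹` and `Sq²`, presented
as the quotient of the free `F₂`-algebra on two generators `Sq1, Sq2` by the two-sided ideal
generated by `Sq1·Sq1` and `Sq2·Sq2 + Sq1·Sq2·Sq1`. -/
abbrev A1 : Type := RingQuot A1Rel

/-- The image of `Sq¹` in `A(1)`. -/
noncomputable def Sq1 : A1 := RingQuot.mkAlgHom (ZMod 2) A1Rel (FreeAlgebra.ι (ZMod 2) 0)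

/-- The image of `Sq²` in `A(1)`. -/
noncomputable def Sq2 : A1 := RingQuot.mkAlgHom (ZMod 2) A1Rel (FreeAlgebra.ι (ZMod 2) 1)

/-- Milnor's element `Q₀ = Sq¹·Sq² + Sq²·Sq¹` in `A(1)`. -/
noncomputable def Q0 : A1 := Sq1 * Sq2 + Sq2 * Sq1

theorem A1_aa : Sq1 * Sq1 = 0 := by
  have h := RingQuot.mkAlgHom_rel (ZMod 2) A1Rel.sq1
  simpa [Sq1] using h

theorem A1_bb : Sq2 * Sq2 = Sq1 * (Sq2 * Sq1) := by
  have h := RingQuot.mkAlgHom_rel (ZMod 2) A1Rel.sq2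
  simp only [map_add, map_mul, map_zero] at h
  have h2 : ∀ x : A1, x + x = 0 := fun x => by
    have : (2 : ZMod 2) • x = 0 := by
      rw [show (2 : ZMod 2) = 0 from rfl, zero_smul]
    rwa [two_smul] at this
  have h3 : Sq2 * Sq2 + Sq1 * Sq2 * Sq1 = 0 := h
  rw [← mul_assoc, ← sub_eq_zero, sub_eq_add_neg, ← eq_neg_of_add_eq_zero_left (h2 _)]
  exact h3

theorem A1_baba : Sq2 * (Sq1 * (Sq2 * Sq1)) = Sq1 * (Sq2 * (Sq1 * Sq2)) := by
  rw [← A1_bb, ← mul_assoc, A1_bb]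
  simp only [mul_assoc]

/-- Letters. -/
noncomputable def A1let (t : Bool) : A1 := if t then Sq2 else Sq1

theorem A1_five (l : List Bool) (hl : 5 ≤ l.length) : (l.map A1let).prod = 0 := by
  have aa' : ∀ x, Sq1 * (Sq1 * x) = 0 := fun x => by rw [← mul_assoc, A1_aa, zero_mul]
  have bb' : ∀ x, Sq2 * (Sq2 * x) = Sq1 * (Sq2 * (Sq1 * x)) := fun x => by
    rw [← mul_assoc, A1_bb]; simp only [mul_assoc]
  have baba' : ∀ x, Sq2 * (Sq1 * (Sq2 * (Sq1 * x))) = Sq1 * (Sq2 * (Sq1 * (Sq2 * x))) := fun x => by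
    have := congrArg (· * x) A1_baba
    simpa only [mul_assoc] using this
  match l, hl with
  | p :: q :: r :: s :: t :: l, _ =>
    simp only [List.map_cons, List.prod_cons]
    generalize (l.map A1let).prod = x
    cases p <;> cases q <;> cases r <;> cases s <;> cases t <;>
      simp [A1let, aa', bb', baba']

/-- Span of words of length at least `n`. -/
noncomputable def A1W (n : ℕ) : Submodule (ZMod 2) A1 :=
  Submodule.span (ZMod 2) {x | ∃ l : List Bool, n ≤ l.length ∧ (l.map A1let).prod = x}

theorem A1W_mul (m n : ℕ) {x y : A1} (hx : x ∈ A1W m) (hy : y ∈ A1W n) :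
    x * y ∈ A1W (m + n) := by
  have h : A1W m * A1W n ≤ A1W (m + n) := by
    unfold A1W
    rw [Submodule.span_mul_span]
    apply Submodule.span_mono
    rintro _ ⟨_, ⟨l, hl, rfl⟩, _, ⟨k, hk, rfl⟩, rfl⟩
    exact ⟨l ++ k, by simp; omega, by simp⟩
  exact h (Submodule.mul_mem_mul hx hy)

theorem A1W_let (t : Bool) : A1let t ∈ A1W 1 :=
  Submodule.subset_span ⟨[t], by simp, by simp⟩

theorem A1W_anti {m n : ℕ} (h : m ≤ n) : A1W n ≤ A1W m := by
  apply Submodule.span_mono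
  rintro _ ⟨l, hl, rfl⟩
  exact ⟨l, h.trans hl, rfl⟩

theorem A1W_zero (x : A1) : x ∈ A1W 0 := by
  obtain ⟨y, rfl⟩ := RingQuot.mkAlgHom_surjective (ZMod 2) A1Rel x
  have h1 : (1 : A1) ∈ A1W 0 := Submodule.subset_span ⟨[], by simp, by simp⟩
  induction y using FreeAlgebra.induction with
  | grade0 r =>
    rw [AlgHom.commutes, Algebra.algebraMap_eq_smul_one]
    exact Submodule.smul_mem _ _ h1
  | grade1 i =>
    apply A1W_anti (Nat.zero_le 1)
    fin_cases i
    · exact A1W_let false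
    · exact A1W_let true
  | mul a b ha hb => rw [map_mul]; exact A1W_mul 0 0 ha hb
  | add a b ha hb => rw [map_add]; exact add_mem ha hb

theorem A1_I_le {x : A1} (hx : x ∈ (TwoSidedIdeal.span {Sq1, Sq2} : TwoSidedIdeal A1)) :
    x ∈ A1W 1 := by
  rw [TwoSidedIdeal.mem_span_iff] at hx
  have := hx (TwoSidedIdeal.mk' (A1W 1 : Set A1) (zero_mem _) (fun h k => add_mem h k)
    (fun h => neg_mem h) (fun {x y} h => by simpa using A1W_mul 0 1 (A1W_zero x) h)
    (fun {x y} h => by simpa using A1W_mul 1 0 h (A1W_zero y))) (by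
      rintro _ (rfl | rfl)
      · simpa [TwoSidedIdeal.mem_mk', A1let] using A1W_let false
      · simpa [TwoSidedIdeal.mem_mk', A1let] using A1W_let true)
  simpa [TwoSidedIdeal.mem_mk'] using this

theorem A1_pow_le (n : ℕ) : ∀ x ∈ ((TwoSidedIdeal.span {Sq1, Sq2} : TwoSidedIdeal A1).asIdeal) ^ n,
    x ∈ A1W n := by
  induction n with
  | zero => intro x _; exact A1W_zero x
  | succ n ih =>
    intro x hx
    rw [Submodule.pow_succ] at hx
    refine Submodule.mul_induction_on hx ?_ ?_
    · intro r hr y hy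
      exact A1W_mul n 1 (ih r hr) (A1_I_le (by simpa using hy))
    · intro x y hx hy
      exact add_mem hx hy

/-- In `A(1)`, the augmentation ideal `I`, the two-sided ideal generated by `Sq1` and `Sq2`,
satisfies `I⁸ = 0`. -/
theorem A1_augmentationIdeal_pow_eight :
    ((TwoSidedIdeal.span {Sq1, Sq2} : TwoSidedIdeal A1).asIdeal) ^ 8 = ⊥ := by
  rw [eq_bot_iff]
  intro x hx
  have h := A1_pow_le 8 x hx
  have h0 : A1W 8 ≤ ⊥ := by
    apply Submodule.span_le.2
    rintro _ ⟨l, hl, rfl⟩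
    simpa using A1_five l (by omega)
  simpa using h0 h
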